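/- Let d ≥ 1, D := {1,...,d}, let B ⊆ D with |B| > 1 and B' := D \ B, and define h : I^d → ℝ by h(x) := ∏_{i∈B} D_{2^{2n+1}}(x_i). There exist constants c_1, c_2 > 0 depending only on d such that for every n ≥ m_0, mes{x ∈ I^d : |(L_{p_n(B)}∘R_{p_n(B')})(h; x)| ≥ c_1 · 2^{n(2|B|−1)}} ≥ c_2 · n^{|B|−1} / 2^{n(2|B|−1)}, where p_n(B) denotes the index vector all of whose coordinates equal p_n. -/

import Mathlib

open MeasureTheory Filter

noncomputable section

/-- The unit cube `[0,1)^d`. -/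
def unitCube (d : ℕ) : Set (Fin d → ℝ) := Set.univ.pi fun _ => Set.Ico (0:ℝ) 1

/-- Lebesgue measure restricted to the unit cube `[0,1)^d`. -/
def cubeMeasure (d : ℕ) : Measure (Fin d → ℝ) := volume.restrict (unitCube d)

/-- The `1`-periodic function equal to `1` on `[0,1/2)` and to `-1` on `[1/2,1)`. -/
def r0 (x : ℝ) : ℝ := if Int.fract x < 1/2 then 1 else -1

/-- The Rademacher functions. -/
def rademacher (n : ℕ) (x : ℝ) : ℝ := r0 (2 ^ n * x)

/-- The Walsh functions (in Paley enumeration, via binary digits). -/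
def walsh (n : ℕ) (x : ℝ) : ℝ :=
  ∏ k ∈ Finset.range (n + 1), if n.testBit k then rademacher k x else 1

/-- The Walsh–Dirichlet kernel `D_n`. -/
def dirichletKernel (n : ℕ) (x : ℝ) : ℝ := ∑ k ∈ Finset.range n, walsh k x

/-- `l_n = ∑_{k=1}^{n-1} 1/k`. -/
def logSum (n : ℕ) : ℝ := ∑ k ∈ Finset.Icc 1 (n - 1), (1 : ℝ) / k

/-- The Nörlund logarithmic kernel `F_n`. -/
def FKernel (n : ℕ) (u : ℝ) : ℝ :=
  (1 / logSum n) * ∑ i ∈ Finset.Ico 1 n, dirichletKernel (n - i) u / i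

/-- The Riesz logarithmic kernel `G_n`. -/
def GKernel (n : ℕ) (u : ℝ) : ℝ :=
  (1 / logSum n) * ∑ i ∈ Finset.Ico 1 n, dirichletKernel i u / i

/-- Walsh–Fourier coefficient of `f` on the unit cube. -/
def walshCoef {d : ℕ} (f : (Fin d → ℝ) → ℝ) (j : Fin d → ℕ) : ℝ :=
  ∫ x, f x * ∏ i, walsh (j i) (x i) ∂(cubeMeasure d)

/-- Rectangular partial sums of the multiple Walsh–Fourier series. -/
def rectPartialSum {d : ℕ} (f : (Fin d → ℝ) → ℝ) (N : Fin d → ℕ) (x : Fin d → ℝ) : ℝ :=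
  ∑ j ∈ Fintype.piFinset (fun i => Finset.range (N i)),
    walshCoef f j * ∏ i, walsh (j i) (x i)

/-- The mixed logarithmic means `(L_{n_B} ∘ R_{n_{B'}})(f)`. -/
def mixedLogMean {d : ℕ} (B : Finset (Fin d)) (f : (Fin d → ℝ) → ℝ)
    (n : Fin d → ℕ) (x : Fin d → ℝ) : ℝ :=
  (∏ j, logSum (n j))⁻¹ *
    ∑ i ∈ Fintype.piFinset (fun j => Finset.Ico 1 (n j)),
      rectPartialSum f (fun j => if j ∈ B then n j - i j else i j) x / ∏ j, (i j : ℝ)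

/-- A Young function: convex, continuous, even, vanishing at `0`, with
`Q(u)/u → ∞` at `+∞` and `Q(u)/u → 0` at `0`. -/
structure YoungFunction where
  toFun : ℝ → ℝ
  nonneg : ∀ u, 0 ≤ toFun u
  convexOn : ConvexOn ℝ Set.univ toFun
  continuous : Continuous toFun
  even : ∀ u, toFun (-u) = toFun u
  map_zero : toFun 0 = 0
  tendsto_atTop : Tendsto (fun u => toFun u / u) atTop atTop
  tendsto_zero : Tendsto (fun u => toFun u / u) (nhdsWithin 0 {(0:ℝ)}ᶜ) (nhds 0)

/-- The set of admissible constants `k` in the Luxemburg norm of `f`. -/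
def orliczSet {d : ℕ} (Q : YoungFunction) (f : (Fin d → ℝ) → ℝ) : Set ℝ :=
  {k | 0 < k ∧ Integrable (fun x => Q.toFun (|f x| / k)) (cubeMeasure d) ∧
    ∫ x, Q.toFun (|f x| / k) ∂(cubeMeasure d) ≤ 1}

/-- `f` belongs to the Orlicz space `L_Q(I^d)`. -/
def MemOrlicz {d : ℕ} (Q : YoungFunction) (f : (Fin d → ℝ) → ℝ) : Prop :=
  Measurable f ∧ (orliczSet Q f).Nonempty

/-- The Luxemburg norm on the Orlicz space `L_Q(I^d)`. -/
def orliczNorm {d : ℕ} (Q : YoungFunction) (f : (Fin d → ℝ) → ℝ) : ℝ :=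
  sInf (orliczSet Q f)

/-- `p_n = 2^{2n} + 2^{2n-2} + ⋯ + 2^0`. -/
def pIdx (n : ℕ) : ℕ := ∑ k ∈ Finset.range (n + 1), 4 ^ k

/-- `m̃ = ⌊ l_{p_{⌊m/2⌋}-1}/16 - 2^15 ⌋`. -/
def mTilde (m : ℕ) : ℤ := ⌊logSum (pIdx (m / 2) - 1) / 16 - 2 ^ 15⌋

/-- `m₀ = min{m : m̃ > 1}`. -/
def m₀ : ℕ := sInf {m : ℕ | 1 < mTilde m}

/-- The set `Ω_n`. -/
def Omega (n : ℕ) : Set ℝ :=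
  ⋃ m ∈ Finset.Icc n (2 * n),
    Set.Ico ((2:ℝ) ^ (-(m:ℤ) - 1) + (2:ℝ) ^ (-(m:ℤ) - mTilde m)) ((2:ℝ) ^ (-(m:ℤ)))

/-- `k`-th binary digit of `x` (the expansion not terminating in `1`'s). -/
def binDigit (k : ℕ) (x : ℝ) : ℕ := (⌊x * 2 ^ (k + 1)⌋).toNat % 2

/-- Dyadic addition on `[0,1)`. -/
def dyadicAdd (x t : ℝ) : ℝ :=
  ∑' k : ℕ, |(binDigit k x : ℝ) - (binDigit k t : ℝ)| / 2 ^ (k + 1)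

/-- Dyadic convolution `f ∗ K` on `[0,1)`. -/
def dyadicConv (f K : ℝ → ℝ) (x : ℝ) : ℝ :=
  ∫ t in Set.Ico (0:ℝ) 1, f t * K (dyadicAdd x t)

/-- Lebesgue measure restricted to `[0,1)`. -/
def unitMeasure : Measure ℝ := volume.restrict (Set.Ico (0:ℝ) 1)

/-- A set `A ⊆ L_Q(I^d)` is nowhere dense w.r.t. the Luxemburg norm. -/
def OrliczNowhereDense {d : ℕ} (Q : YoungFunction) (A : Set ((Fin d → ℝ) → ℝ)) : Prop :=
  ∀ f, MemOrlicz Q f → ∀ ε > 0, ∃ g, MemOrlicz Q g ∧ ∃ δ > 0,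
    (∀ h, MemOrlicz Q h → orliczNorm Q (h - g) < δ → orliczNorm Q (h - f) < ε) ∧
    (∀ h, MemOrlicz Q h → orliczNorm Q (h - g) < δ → h ∉ A)

/-- A set `A ⊆ L_Q(I^d)` is of first Baire category (meager) w.r.t. the Luxemburg norm. -/
def OrliczMeager {d : ℕ} (Q : YoungFunction) (A : Set ((Fin d → ℝ) → ℝ)) : Prop :=
  ∃ F : ℕ → Set ((Fin d → ℝ) → ℝ), (∀ k, OrliczNowhereDense Q (F k)) ∧ A ⊆ ⋃ k, F k

/-!
The mean factorises as `∏_{i ∈ B} F_{p_n}(x_i)`, since a partial sum of `D_{2^{2n+1}}` of order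
`k ≤ p_n` is `D_k`, and the coordinates outside `B` contribute the Riesz means of the constant `1`.

For `n ≤ m ≤ 2n` consider the shell `[2^{-m-1}, 2^{-m})`. There `|F_{p_n}| ≤ 2^m`. Write
`p_n = Q + r` with `2^{m+1} ∣ Q` and `r = p_{⌊m/2⌋}`. On the shell `w_Q D_k` has integral `0` for
`k ≤ Q`, while `w_Q D_{Q+s}` is the tent `min(s, 2^{m+1} - s)` for `s ≤ r`, which is of order `2^m`
for `s = r - i` with `i ≤ 2^{m-2}`. Averaging with the weights `1/i` shows that
`∫ w_Q F_{p_n}` over the shell is bounded below by an absolute constant. Comparing with the upper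
bound `2^m`, one gets `|F_{p_n}| ≥ c 2^m` on a subset of the shell of measure at least `c' 2^{-m}`.

Multiplying such sets over `B` with exponents `m_i = 2n - a_i`, `∑ a_i = n`, gives disjoint boxes of
measure `≳ 2^{-n(2|B|-1)}` on which the product is `≳ 2^{n(2|B|-1)}`, and there are
`≳ n^{|B|-1}` choices of `a`.
-/

section Rademacher

lemma r0_mul_self (x : ℝ) : r0 x * r0 x = 1 := by
  unfold r0
  split_ifs <;> norm_num

lemma measurable_r0 : Measurable r0 :=
  .ite (measurableSet_lt measurable_fract measurable_const) measurable_const measurable_const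

lemma r0_eq_ite_even_floor (x : ℝ) : r0 x = if Even ⌊2 * x⌋ then 1 else -1 := by
  have hx := Int.floor_add_fract x
  have hlt := Int.fract_lt_one x
  have hnn := Int.fract_nonneg x
  unfold r0
  by_cases h : Int.fract x < 1 / 2
  · have hfloor : ⌊2 * x⌋ = 2 * ⌊x⌋ := by
      rw [Int.floor_eq_iff]
      push_cast
      constructor <;> linarith
    rw [if_pos h, hfloor, if_pos (even_two_mul _)]
  · have hfloor : ⌊2 * x⌋ = 2 * ⌊x⌋ + 1 := by
      rw [Int.floor_eq_iff]
      push_cast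
      constructor <;> linarith
    rw [if_neg h, hfloor, if_neg (Int.not_even_two_mul_add_one _)]

lemma r0_of_mem_Ico {k : ℤ} {x : ℝ} (hx : x ∈ Set.Ico (k / 2 : ℝ) ((k + 1) / 2)) :
    r0 x = if Even k then 1 else -1 := by
  have hfloor : ⌊2 * x⌋ = k := by
    rw [Int.floor_eq_iff]
    constructor <;> linarith [hx.1, hx.2]
  rw [r0_eq_ite_even_floor, hfloor]

end Rademacher

section Walsh

lemma walsh_eq_prod_range {n N : ℕ} (hn : n < 2 ^ N) (x : ℝ) :
    walsh n x = ∏ k ∈ Finset.range N, if n.testBit k then rademacher k x else 1 := by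
  have factor_eq_one {A : ℕ} (hA : n < 2 ^ A) (k : ℕ) (hk : k ∉ Finset.range A) :
      (if n.testBit k then rademacher k x else 1) = 1 := by
    have hAk : A ≤ k := by simpa using hk
    simp [Nat.testBit_lt_two_pow (hA.trans_le (Nat.pow_le_pow_right two_pos hAk))]
  exact Finset.prod_congr_of_eq_on_inter (fun k _ hk => factor_eq_one hn k hk)
    (fun k _ hk => factor_eq_one (n.lt_succ_self.trans Nat.lt_two_pow_self) k hk)
    fun _ _ _ => rfl

@[simp]
lemma walsh_zero (x : ℝ) : walsh 0 x = 1 := by simp [walsh]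

lemma walsh_mul_walsh (j k : ℕ) (x : ℝ) : walsh j x * walsh k x = walsh (j ^^^ k) x := by
  have hj : j < 2 ^ (j + k) := Nat.lt_two_pow_self.trans_le (by gcongr <;> omega)
  have hk : k < 2 ^ (j + k) := Nat.lt_two_pow_self.trans_le (by gcongr <;> omega)
  rw [walsh_eq_prod_range hj, walsh_eq_prod_range hk,
    walsh_eq_prod_range (Nat.xor_lt_two_pow hj hk), ← Finset.prod_mul_distrib]
  refine Finset.prod_congr rfl fun i _ => ?_
  have hsq : rademacher i x * rademacher i x = 1 := r0_mul_self _
  rw [Nat.testBit_xor]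
  cases j.testBit i <;> cases k.testBit i <;> simp [hsq]

lemma walsh_mul_self (n : ℕ) (x : ℝ) : walsh n x * walsh n x = 1 := by
  rw [walsh_mul_walsh, Nat.xor_self, walsh_zero]

lemma abs_walsh (n : ℕ) (x : ℝ) : |walsh n x| = 1 := by
  rcases mul_self_eq_one_iff.1 (walsh_mul_self n x) with h | h <;> simp [h]

lemma two_pow_mul_xor {M s : ℕ} (q : ℕ) (hs : s < 2 ^ M) :
    (2 ^ M * q) ^^^ s = 2 ^ M * q + s := by
  refine Nat.eq_of_testBit_eq fun i => ?_
  rw [Nat.testBit_xor, Nat.testBit_two_pow_mul_add _ hs, Nat.testBit_two_pow_mul]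
  split_ifs with hi
  · simp [not_le.2 hi]
  · have hsi : s < 2 ^ i := hs.trans_le (Nat.pow_le_pow_right two_pos (by omega))
    simp [Nat.testBit_lt_two_pow hsi, not_lt.1 hi]

lemma walsh_two_pow_mul_add {M s : ℕ} (q : ℕ) (hs : s < 2 ^ M) (x : ℝ) :
    walsh (2 ^ M * q + s) x = walsh (2 ^ M * q) x * walsh s x := by
  rw [walsh_mul_walsh, two_pow_mul_xor q hs]

lemma walsh_bit (b : Bool) (n : ℕ) (x : ℝ) :
    walsh (Nat.bit b n) x = (if b then r0 x else 1) * walsh n (2 * x) := by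
  have hn : n < 2 ^ (n + 1) := n.lt_succ_self.trans Nat.lt_two_pow_self
  rw [walsh_eq_prod_range (Nat.bit_lt_two_pow_succ_iff.2 hn), Finset.prod_range_succ', mul_comm,
    walsh]
  simp only [Nat.testBit_bit_zero, Nat.testBit_bit_succ, rademacher, pow_zero, one_mul, pow_succ,
    mul_assoc]

lemma measurable_walsh (n : ℕ) : Measurable (walsh n) := by
  refine Finset.measurable_fun_prod _ fun k _ => ?_
  split_ifs
  · exact measurable_r0.comp (measurable_const.mul measurable_id)
  · exact measurable_const

lemma integrable_walsh (n : ℕ) (μ : Measure ℝ) [IsFiniteMeasure μ] : Integrable (walsh n) μ :=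
  .of_bound (measurable_walsh n).aestronglyMeasurable 1 <|
    .of_forall fun x => (abs_walsh n x).le

lemma intervalIntegrable_walsh (n : ℕ) (u v : ℝ) : IntervalIntegrable (walsh n) volume u v :=
  ⟨integrable_walsh n _, integrable_walsh n _⟩

lemma intervalIntegral_walsh_bit (b : Bool) (n : ℕ) {k : ℤ} {u v : ℝ} (huv : u ≤ v)
    (hu : k ≤ u) (hv : v ≤ k + 1) :
    ∫ x in (u / 2)..(v / 2), walsh (Nat.bit b n) x =
      (if b ∧ ¬Even k then -1 else 1) / 2 * ∫ x in u..v, walsh n x := by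
  set ε : ℝ := if b ∧ ¬Even k then -1 else 1 with hε
  have eqOn_Ico : Set.EqOn (walsh (Nat.bit b n)) (fun x => ε * walsh n (2 * x))
      (Set.Ico (u / 2) (v / 2)) := by
    intro x hx
    have hr : r0 x = if Even k then 1 else -1 :=
      r0_of_mem_Ico ⟨by linarith [hx.1], by linarith [hx.2]⟩
    simp only [walsh_bit, hr, hε]
    cases b <;> by_cases hk : Even k <;> simp [hk]
  calc ∫ x in (u / 2)..(v / 2), walsh (Nat.bit b n) x
      = ∫ x in (u / 2)..(v / 2), ε * walsh n (2 * x) := by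
        simp only [intervalIntegral.integral_of_le (div_le_div_of_nonneg_right huv two_pos.le),
          ← integral_Ico_eq_integral_Ioc]
        exact setIntegral_congr_fun measurableSet_Ico eqOn_Ico
    _ = ε / 2 * ∫ x in u..v, walsh n x := by
        rw [intervalIntegral.integral_const_mul,
          intervalIntegral.integral_comp_mul_left (walsh n) two_ne_zero,
          mul_div_cancel₀ u two_ne_zero, mul_div_cancel₀ v two_ne_zero, smul_eq_mul]
        ring

lemma intervalIntegral_walsh_unit_eq_zero {n : ℕ} (hn : n ≠ 0) (k : ℤ) :
    ∫ x in (k : ℝ)..(k + 1), walsh n x = 0 := by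
  induction n using Nat.binaryRec generalizing k with
  | zero => exact absurd rfl hn
  | bit b n ih =>
    have left := intervalIntegral_walsh_bit b n (k := 2 * k) (u := 2 * k) (v := 2 * k + 1)
      (by linarith) (by push_cast; rfl) (by push_cast; rfl)
    have right := intervalIntegral_walsh_bit b n (k := 2 * k + 1) (u := 2 * k + 1)
      (v := 2 * k + 1 + 1) (by linarith) (by push_cast; rfl) (by push_cast; rfl)
    rw [show (k : ℝ) = 2 * k / 2 by ring, show (2 * k / 2 + 1 : ℝ) = (2 * k + 1 + 1) / 2 by ring,
      ← intervalIntegral.integral_add_adjacent_intervals (b := (2 * k + 1 : ℝ) / 2)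
        (intervalIntegrable_walsh _ _ _) (intervalIntegrable_walsh _ _ _), left, right]
    rcases eq_or_ne n 0 with rfl | hn₀
    · obtain rfl : b = true := by simpa using hn
      norm_num [Int.even_add_one]
    · have ih_left := ih hn₀ (2 * k)
      have ih_right := ih hn₀ (2 * k + 1)
      push_cast at ih_left ih_right
      rw [ih_left, ih_right, mul_zero, mul_zero, add_zero]

lemma intervalIntegral_walsh_dyadic_eq_zero {M n : ℕ} (hn : 2 ^ M ≤ n) (k : ℤ) :
    ∫ x in (k / 2 ^ M : ℝ)..((k + 1) / 2 ^ M), walsh n x = 0 := by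
  induction M generalizing n with
  | zero => simpa using intervalIntegral_walsh_unit_eq_zero (by omega) k
  | succ M ih =>
    induction n using Nat.bitCasesOn with | _ b n
    have hn' : 2 ^ M ≤ n := by
      rw [← not_lt] at hn ⊢
      rwa [Nat.bit_lt_two_pow_succ_iff] at hn
    have hlower : ((k / 2 ^ M : ℤ) : ℝ) ≤ k / 2 ^ M := by
      rw [le_div_iff₀ (by positivity)]
      exact_mod_cast Int.ediv_mul_le k (by positivity)
    have hupper : ((k : ℝ) + 1) / 2 ^ M ≤ (k / 2 ^ M : ℤ) + 1 := by
      rw [div_le_iff₀ (by positivity)]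
      exact_mod_cast Int.lt_ediv_add_one_mul_self k (by positivity : (0 : ℤ) < 2 ^ M)
    rw [pow_succ, ← div_div, ← div_div,
      intervalIntegral_walsh_bit b n (by gcongr; linarith) hlower hupper, ih hn', mul_zero]

lemma setIntegral_walsh_dyadic_eq_zero {M n : ℕ} (hn : 2 ^ M ≤ n) (k : ℤ) :
    ∫ x in Set.Ico (k / 2 ^ M : ℝ) ((k + 1) / 2 ^ M), walsh n x = 0 := by
  rw [integral_Ico_eq_integral_Ioc,
    ← intervalIntegral.integral_of_le (by gcongr; linarith),
    intervalIntegral_walsh_dyadic_eq_zero hn]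

lemma setIntegral_walsh_mul_walsh (j k : ℕ) :
    ∫ x in Set.Ico (0 : ℝ) 1, walsh j x * walsh k x = if j = k then 1 else 0 := by
  simp only [walsh_mul_walsh]
  split_ifs with h
  · simp [h]
  · have hpos : 2 ^ 0 ≤ j ^^^ k := Nat.pos_of_ne_zero (by rwa [Ne, Nat.xor_eq_zero_iff])
    simpa using setIntegral_walsh_dyadic_eq_zero hpos 0

end Walsh

section DirichletKernel

@[simp]
lemma dirichletKernel_one (x : ℝ) : dirichletKernel 1 x = 1 := by simp [dirichletKernel]

lemma measurable_dirichletKernel (n : ℕ) : Measurable (dirichletKernel n) :=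
  Finset.measurable_fun_sum _ fun k _ => measurable_walsh k

lemma walsh_mul_dirichletKernel (j n : ℕ) (x : ℝ) :
    walsh j x * dirichletKernel n x = ∑ k ∈ Finset.range n, walsh (j ^^^ k) x := by
  simp only [dirichletKernel, Finset.mul_sum, walsh_mul_walsh]

lemma integrable_walsh_mul_dirichletKernel (j n : ℕ) (μ : Measure ℝ) [IsFiniteMeasure μ] :
    Integrable (fun x => walsh j x * dirichletKernel n x) μ := by
  simp only [walsh_mul_dirichletKernel]
  exact integrable_finsetSum _ fun k _ => integrable_walsh _ μ

lemma setIntegral_dirichletKernel_mul_walsh (K j : ℕ) :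
    ∫ x in Set.Ico (0 : ℝ) 1, dirichletKernel K x * walsh j x = if j < K then 1 else 0 := by
  simp only [dirichletKernel, Finset.sum_mul]
  rw [integral_finsetSum _ fun k _ => by
    simpa only [walsh_mul_walsh] using integrable_walsh _ _]
  simp [setIntegral_walsh_mul_walsh]

end DirichletKernel

section DyadicShell

/-- The dyadic shell `[2^{-m-1}, 2^{-m})`. On it `w_0, …, w_{2^m-1}` equal `1` and
`w_{2^m}, …, w_{2^{m+1}-1}` equal `-1`, which makes the kernels computable there. -/
def dyadicShell (m : ℕ) : Set ℝ := Set.Ico (1 / 2 ^ (m + 1)) (1 / 2 ^ m)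

lemma measurableSet_dyadicShell (m : ℕ) : MeasurableSet (dyadicShell m) := measurableSet_Ico

lemma dyadicShell_subset_Ico (m : ℕ) : dyadicShell m ⊆ Set.Ico 0 1 :=
  Set.Ico_subset_Ico (by positivity) <|
    div_le_one_of_le₀ (one_le_pow₀ one_le_two) (by positivity)

lemma pairwise_disjoint_dyadicShell : Pairwise (Function.onFun Disjoint dyadicShell) := by
  have anti : Antitone fun m : ℕ => 1 / (2 : ℝ) ^ m := fun a b hab =>
    one_div_le_one_div_of_le (by positivity) (pow_le_pow_right₀ one_le_two hab)
  exact anti.pairwise_disjoint_on_Ico_succ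

lemma volume_real_dyadicShell (m : ℕ) : volume.real (dyadicShell m) = 1 / 2 ^ (m + 1) := by
  rw [dyadicShell, Real.volume_real_Ico_of_le (by gcongr <;> simp)]
  field_simp
  ring

instance (m : ℕ) : IsFiniteMeasure (volume.restrict (dyadicShell m)) := by
  unfold dyadicShell
  infer_instance

lemma setIntegral_dyadicShell_walsh_eq_zero {m n : ℕ} (hn : 2 ^ (m + 1) ≤ n) :
    ∫ x in dyadicShell m, walsh n x = 0 := by
  have h := setIntegral_walsh_dyadic_eq_zero hn 1
  have hright : ((1 : ℤ) + 1 : ℝ) / 2 ^ (m + 1) = 1 / 2 ^ m := by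
    rw [pow_succ]
    field_simp
    norm_num
  rwa [hright, Int.cast_one] at h

variable {m : ℕ} {x : ℝ}

lemma rademacher_of_mem_dyadicShell_of_lt {k : ℕ} (hx : x ∈ dyadicShell m) (hk : k < m) :
    rademacher k x = 1 := by
  have hx₀ : 0 ≤ x := (dyadicShell_subset_Ico m hx).1
  have hxm : 2 ^ m * x < 1 := by
    rw [mul_comm, ← lt_div_iff₀ (by positivity)]
    exact hx.2
  have hkm : (2 : ℝ) ^ (k + 1) * x ≤ 2 ^ m * x := by gcongr; exacts [one_le_two, hk]
  have hmem : 2 ^ k * x ∈ Set.Ico ((0 : ℤ) / 2 : ℝ) (((0 : ℤ) + 1) / 2) := by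
    rw [pow_succ] at hkm
    constructor
    · simpa using by positivity
    · push_cast
      linarith
  simpa [rademacher] using r0_of_mem_Ico hmem

lemma rademacher_of_mem_dyadicShell (hx : x ∈ dyadicShell m) : rademacher m x = -1 := by
  obtain ⟨hleft, hright⟩ := hx
  rw [div_le_iff₀ (by positivity), pow_succ] at hleft
  rw [lt_div_iff₀ (by positivity)] at hright
  have hmem : 2 ^ m * x ∈ Set.Ico ((1 : ℤ) / 2 : ℝ) (((1 : ℤ) + 1) / 2) := by
    constructor <;> push_cast <;> linarith
  simpa [rademacher] using r0_of_mem_Ico hmem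

lemma walsh_of_mem_dyadicShell {s : ℕ} (hx : x ∈ dyadicShell m) (hs : s < 2 ^ (m + 1)) :
    walsh s x = if s < 2 ^ m then 1 else -1 := by
  have htop : s.testBit m = true ↔ ¬s < 2 ^ m :=
    ⟨fun hbit hlt => by simp [Nat.testBit_lt_two_pow hlt] at hbit,
      fun hge => Nat.testBit_of_two_pow_le_and_two_pow_add_one_gt (not_lt.1 hge) hs⟩
  have hlow : ∀ k ∈ Finset.range m, (if s.testBit k then rademacher k x else 1) = 1 :=
    fun k hk => by simp [rademacher_of_mem_dyadicShell_of_lt hx (Finset.mem_range.1 hk)]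
  rw [walsh_eq_prod_range hs, Finset.prod_range_succ, Finset.prod_eq_one hlow, one_mul,
    rademacher_of_mem_dyadicShell hx]
  simp only [htop, ite_not]

/-- The tent function `min(s, 2^{m+1} - s)`: the value of `D_s` on the dyadic shell
`[2^{-m-1}, 2^{-m})` for `s ≤ 2^{m+1}`. The subtraction is in `ℝ`, hence not truncated. -/
def dyadicTent (m s : ℕ) : ℝ := min (s : ℝ) (2 ^ (m + 1) - s)

lemma sum_range_sign_eq_dyadicTent (m s : ℕ) :
    ∑ t ∈ Finset.range s, (if t < 2 ^ m then (1 : ℝ) else -1) = dyadicTent m s := by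
  induction s with
  | zero => simp [dyadicTent]
  | succ s ih =>
    rw [Finset.sum_range_succ, ih]
    unfold dyadicTent
    push_cast
    rw [pow_succ]
    split_ifs with h
    · have h' : (s : ℝ) + 1 ≤ 2 ^ m := mod_cast h
      rw [min_eq_left (by linarith), min_eq_left (by linarith)]
    · have h' : (2 : ℝ) ^ m ≤ s := mod_cast not_lt.1 h
      rw [min_eq_right (by linarith), min_eq_right (by linarith)]
      ring

lemma dyadicTent_nonneg {s : ℕ} (hs : s ≤ 2 ^ (m + 1)) : 0 ≤ dyadicTent m s :=
  le_min s.cast_nonneg (sub_nonneg.2 (mod_cast hs))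

lemma dyadicTent_le (m s : ℕ) : dyadicTent m s ≤ 2 ^ m := by
  have hleft : dyadicTent m s ≤ s := min_le_left _ _
  have hright : dyadicTent m s ≤ 2 ^ (m + 1) - s := min_le_right _ _
  rw [pow_succ] at hright
  linarith

lemma dirichletKernel_add_of_mem_dyadicShell (hx : x ∈ dyadicShell m) (q : ℕ) {s : ℕ}
    (hs : s ≤ 2 ^ (m + 1)) :
    dirichletKernel (2 ^ (m + 1) * q + s) x =
      dirichletKernel (2 ^ (m + 1) * q) x + walsh (2 ^ (m + 1) * q) x * dyadicTent m s := by
  rw [← sum_range_sign_eq_dyadicTent, dirichletKernel, Finset.sum_range_add, Finset.mul_sum,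
    dirichletKernel]
  congr 1
  refine Finset.sum_congr rfl fun t ht => ?_
  have ht' : t < 2 ^ (m + 1) := (Finset.mem_range.1 ht).trans_le hs
  rw [walsh_two_pow_mul_add q ht', walsh_of_mem_dyadicShell hx ht']

lemma dirichletKernel_two_pow_mul_of_mem_dyadicShell (hx : x ∈ dyadicShell m) (q : ℕ) :
    dirichletKernel (2 ^ (m + 1) * q) x = 0 := by
  induction q with
  | zero => simp [dirichletKernel]
  | succ q ih =>
    rw [mul_add_one, dirichletKernel_add_of_mem_dyadicShell hx q le_rfl, ih]
    simp [dyadicTent]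

lemma dirichletKernel_of_mem_dyadicShell (hx : x ∈ dyadicShell m) (q : ℕ) {s : ℕ}
    (hs : s ≤ 2 ^ (m + 1)) :
    dirichletKernel (2 ^ (m + 1) * q + s) x = walsh (2 ^ (m + 1) * q) x * dyadicTent m s := by
  rw [dirichletKernel_add_of_mem_dyadicShell hx q hs,
    dirichletKernel_two_pow_mul_of_mem_dyadicShell hx, zero_add]

lemma abs_dirichletKernel_le_of_mem_dyadicShell (hx : x ∈ dyadicShell m) (k : ℕ) :
    |dirichletKernel k x| ≤ 2 ^ m := by
  have hs : k % 2 ^ (m + 1) ≤ 2 ^ (m + 1) := (Nat.mod_lt _ (by positivity)).le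
  rw [← Nat.div_add_mod k (2 ^ (m + 1)), dirichletKernel_of_mem_dyadicShell hx _ hs, abs_mul,
    abs_walsh, one_mul, abs_of_nonneg (dyadicTent_nonneg hs)]
  exact dyadicTent_le m _

lemma setIntegral_walsh_mul_dirichletKernel_eq_zero {q k : ℕ} (hk : k ≤ 2 ^ (m + 1) * q) :
    ∫ x in dyadicShell m, walsh (2 ^ (m + 1) * q) x * dirichletKernel k x = 0 := by
  simp only [walsh_mul_dirichletKernel]
  rw [integral_finsetSum _ fun j _ => integrable_walsh _ _]
  refine Finset.sum_eq_zero fun j hj => setIntegral_dyadicShell_walsh_eq_zero ?_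
  by_contra! hlt
  have hxor := two_pow_mul_xor q hlt
  rw [← Nat.xor_assoc, Nat.xor_self, Nat.zero_xor] at hxor
  have := Finset.mem_range.1 hj
  omega

lemma setIntegral_walsh_mul_dirichletKernel_add (q : ℕ) {s : ℕ} (hs : s ≤ 2 ^ (m + 1)) :
    ∫ x in dyadicShell m, walsh (2 ^ (m + 1) * q) x * dirichletKernel (2 ^ (m + 1) * q + s) x =
      dyadicTent m s / 2 ^ (m + 1) := by
  have eqOn_const : Set.EqOn
      (fun x => walsh (2 ^ (m + 1) * q) x * dirichletKernel (2 ^ (m + 1) * q + s) x)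
      (fun _ => dyadicTent m s) (dyadicShell m) := fun x hx => by
    simp only [dirichletKernel_of_mem_dyadicShell hx q hs]
    rw [← mul_assoc, walsh_mul_self, one_mul]
  rw [setIntegral_congr_fun (measurableSet_dyadicShell m) eqOn_const, setIntegral_const,
    volume_real_dyadicShell, smul_eq_mul, one_div_mul_eq_div]

lemma setIntegral_walsh_mul_dirichletKernel_nonneg {q k : ℕ}
    (hk : k ≤ 2 ^ (m + 1) * q + 2 ^ (m + 1)) :
    0 ≤ ∫ x in dyadicShell m, walsh (2 ^ (m + 1) * q) x * dirichletKernel k x := by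
  rcases le_total k (2 ^ (m + 1) * q) with hle | hge
  · rw [setIntegral_walsh_mul_dirichletKernel_eq_zero hle]
  · obtain ⟨s, rfl⟩ := Nat.exists_eq_add_of_le hge
    have hs : s ≤ 2 ^ (m + 1) := by omega
    rw [setIntegral_walsh_mul_dirichletKernel_add q hs]
    exact div_nonneg (dyadicTent_nonneg hs) (by positivity)

end DyadicShell

section LogSum

lemma logSum_eq_sum_Ico (n : ℕ) : logSum n = ∑ k ∈ Finset.Ico 1 n, (1 : ℝ) / k := by
  have : Finset.Icc 1 (n - 1) = Finset.Ico 1 n := by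
    ext i
    simp only [Finset.mem_Icc, Finset.mem_Ico]
    omega
  rw [logSum, this]

lemma logSum_eq_harmonic (n : ℕ) : logSum n = harmonic (n - 1) := by
  simp [logSum, harmonic_eq_sum_Icc]

lemma monotone_logSum : Monotone logSum := fun a b hab =>
  Finset.sum_le_sum_of_subset_of_nonneg (Finset.Icc_subset_Icc le_rfl (by omega))
    fun i _ _ => by positivity

lemma one_le_logSum {n : ℕ} (hn : 2 ≤ n) : 1 ≤ logSum n :=
  calc (1 : ℝ) = logSum 2 := by simp [logSum]
    _ ≤ logSum n := monotone_logSum hn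

lemma log_le_logSum (n : ℕ) : Real.log n ≤ logSum n := by
  rcases n with _ | n
  · simp [logSum]
  · simpa [logSum_eq_harmonic] using log_add_one_le_harmonic n

lemma tendsto_logSum_atTop : Tendsto logSum atTop atTop :=
  tendsto_atTop_mono log_le_logSum (Real.tendsto_log_atTop.comp tendsto_natCast_atTop_atTop)

lemma logSum_le_of_le_two_pow {N k : ℕ} (hN : N ≤ 2 ^ k) : logSum N ≤ 1 + k := by
  rcases le_or_gt N 1 with hle | hlt
  · have : logSum N ≤ logSum 1 := monotone_logSum hle
    have hzero : logSum 1 = 0 := by simp [logSum]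
    have := k.cast_nonneg (α := ℝ)
    linarith
  have hlog : Real.log (N - 1 : ℕ) ≤ k * Real.log 2 := by
    rw [← Real.log_pow]
    refine Real.log_le_log (mod_cast by omega) ?_
    exact_mod_cast (Nat.sub_le N 1).trans hN
  have hlog_two : k * Real.log 2 ≤ k := mul_le_of_le_one_right k.cast_nonneg
    (Real.log_two_lt_d9.le.trans (by norm_num))
  rw [logSum_eq_harmonic]
  linarith [harmonic_le_one_add_log (N - 1)]

lemma le_logSum_two_pow_add_one (k : ℕ) : (1 / 2 + k / 4 : ℝ) ≤ logSum (2 ^ k + 1) := by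
  have hone : 1 ≤ logSum (2 ^ k + 1) :=
    one_le_logSum (Nat.succ_le_succ Nat.one_le_two_pow)
  have hlog : k * Real.log 2 ≤ logSum (2 ^ k + 1) :=
    calc k * Real.log 2 = Real.log (2 ^ k : ℕ) := by push_cast; rw [Real.log_pow]
      _ ≤ logSum (2 ^ k) := log_le_logSum _
      _ ≤ logSum (2 ^ k + 1) := monotone_logSum (Nat.le_succ _)
  have hlog_two : (1 / 2 : ℝ) ≤ Real.log 2 := by linarith [Real.log_two_gt_d9]
  have : (k * (1 / 2) : ℝ) ≤ k * Real.log 2 := by gcongr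
  linarith

end LogSum

section LogarithmicIndex

lemma three_mul_pIdx_add_one (n : ℕ) : 3 * pIdx n + 1 = 4 * 4 ^ n := by
  rw [mul_comm, ← pow_succ', pIdx]
  exact geom_sum_mul_add 3 (n + 1)

lemma two_le_pIdx {n : ℕ} (hn : n ≠ 0) : 2 ≤ pIdx n := by
  have := three_mul_pIdx_add_one n
  have : 4 ^ 1 ≤ 4 ^ n := Nat.pow_le_pow_right (by norm_num) (Nat.pos_of_ne_zero hn)
  omega

lemma pIdx_le_two_pow (n : ℕ) : pIdx n ≤ 2 ^ (2 * n + 1) := by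
  have := three_mul_pIdx_add_one n
  have : 2 ^ (2 * n) = 4 ^ n := pow_mul 2 2 n
  omega

lemma lt_pIdx (n : ℕ) : n < pIdx n := by
  have := three_mul_pIdx_add_one n
  have : n < 4 ^ n := Nat.lt_pow_self (by norm_num)
  omega

lemma exists_pIdx_eq_two_pow_mul_add {n m : ℕ} (hm : m ≤ 2 * n) :
    ∃ q, pIdx n = 2 ^ (m + 1) * q + pIdx (m / 2) := by
  have hsplit : pIdx n = pIdx (m / 2) + ∑ k ∈ Finset.Ico (m / 2 + 1) (n + 1), 4 ^ k :=
    (Finset.sum_range_add_sum_Ico _ (by omega)).symm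
  obtain ⟨q, hq⟩ : 2 ^ (m + 1) ∣ ∑ k ∈ Finset.Ico (m / 2 + 1) (n + 1), 4 ^ k := by
    refine Finset.dvd_sum fun k hk => ?_
    have hk' := (Finset.mem_Ico.1 hk).1
    rw [show 4 = 2 ^ 2 by norm_num, ← pow_mul]
    exact pow_dvd_pow 2 (by omega)
  exact ⟨q, by rw [hsplit, hq, add_comm]⟩

lemma two_pow_eq_four_pow_or (m : ℕ) : 2 ^ m = 4 ^ (m / 2) ∨ 2 ^ m = 2 * 4 ^ (m / 2) := by
  have hsplit : 2 ^ m = 4 ^ (m / 2) * 2 ^ (m % 2) := by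
    conv_lhs => rw [← Nat.div_add_mod m 2, pow_add, pow_mul]
    rfl
  rcases Nat.mod_two_eq_zero_or_one m with h | h <;> simp [hsplit, h, mul_comm]

lemma two_pow_le_two_mul_pIdx (m : ℕ) : 2 ^ m ≤ 2 * pIdx (m / 2) := by
  have := three_mul_pIdx_add_one (m / 2)
  have : 0 < 4 ^ (m / 2) := by positivity
  rcases two_pow_eq_four_pow_or m with h | h <;> omega

lemma four_mul_pIdx_le (m : ℕ) : 4 * pIdx (m / 2) ≤ 7 * 2 ^ m := by
  have := three_mul_pIdx_add_one (m / 2)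
  rcases two_pow_eq_four_pow_or m with h | h <;> omega

lemma exists_one_lt_mTilde : ∃ m, 1 < mTilde m := by
  obtain ⟨N, hN⟩ := (tendsto_logSum_atTop.eventually_ge_atTop (16 * (2 ^ 15 + 2))).exists
  refine ⟨2 * N, ?_⟩
  have hmono : logSum N ≤ logSum (pIdx (2 * N / 2) - 1) := by
    rw [Nat.mul_div_cancel_left N two_pos]
    exact monotone_logSum (Nat.le_sub_one_of_lt (lt_pIdx N))
  have hfloor : (2 : ℤ) ≤ mTilde (2 * N) := by
    rw [mTilde, Int.le_floor]
    push_cast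
    linarith
  linarith

lemma mTilde_nonpos_of_lt_two {m : ℕ} (hm : m < 2) : mTilde m ≤ 0 := by
  have hzero : logSum (pIdx (m / 2) - 1) = 0 := by
    rw [Nat.div_eq_of_lt hm]
    simp [pIdx, logSum]
  rw [mTilde, hzero]
  exact Int.floor_nonpos (by norm_num)

-- Without a witness of `1 < m̃` the infimum defining `m₀` would be the junk value `0`.
lemma two_le_m₀ : 2 ≤ m₀ := by
  by_contra! hlt
  have hm₀ : 1 < mTilde m₀ := Nat.sInf_mem exists_one_lt_mTilde
  linarith [mTilde_nonpos_of_lt_two hlt]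

end LogarithmicIndex

section FKernel

lemma measurable_FKernel (N : ℕ) : Measurable (FKernel N) :=
  (Finset.measurable_fun_sum _ fun i _ =>
    (measurable_dirichletKernel (N - i)).div_const (i : ℝ)).const_mul _

lemma abs_FKernel_le_of_mem_dyadicShell {m : ℕ} {x : ℝ} (hx : x ∈ dyadicShell m) (N : ℕ) :
    |FKernel N x| ≤ 2 ^ m := by
  have hlog : 0 ≤ logSum N := Finset.sum_nonneg fun i _ => by positivity
  have hsum : |∑ i ∈ Finset.Ico 1 N, dirichletKernel (N - i) x / i| ≤ logSum N * 2 ^ m := by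
    rw [logSum_eq_sum_Ico, Finset.sum_mul]
    refine (Finset.abs_sum_le_sum_abs _ _).trans (Finset.sum_le_sum fun i _ => ?_)
    rw [abs_div, Nat.abs_cast, one_div_mul_eq_div]
    gcongr
    exact abs_dirichletKernel_le_of_mem_dyadicShell hx _
  calc |FKernel N x| ≤ (logSum N)⁻¹ * (logSum N * 2 ^ m) := by
        rw [FKernel, abs_mul, one_div, abs_of_nonneg (inv_nonneg.2 hlog)]
        gcongr
    _ ≤ 2 ^ m := by
        rw [← mul_assoc]
        exact mul_le_of_le_one_left (by positivity) inv_mul_le_one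

lemma integral_walsh_mul_FKernel (j N : ℕ) (μ : Measure ℝ) [IsFiniteMeasure μ] :
    ∫ x, walsh j x * FKernel N x ∂μ =
      (logSum N)⁻¹ * ∑ i ∈ Finset.Ico 1 N, (∫ x, walsh j x * dirichletKernel (N - i) x ∂μ) / i := by
  have hexpand (x : ℝ) : walsh j x * FKernel N x =
      (logSum N)⁻¹ * ∑ i ∈ Finset.Ico 1 N, walsh j x * dirichletKernel (N - i) x / i := by
    rw [FKernel, one_div, mul_left_comm, Finset.mul_sum]
    simp only [mul_div_assoc]
  simp only [hexpand]
  rw [integral_const_mul, integral_finsetSum _ fun i _ =>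
    (integrable_walsh_mul_dirichletKernel j (N - i) μ).div_const _]
  simp only [integral_div]

variable {m r L : ℕ}

lemma one_div_eight_le_setIntegral_walsh_mul_dirichletKernel (q : ℕ) {s : ℕ}
    (hlower : 2 ^ m ≤ 4 * s) (hupper : 4 * s ≤ 7 * 2 ^ m) :
    1 / 8 ≤ ∫ x in dyadicShell m,
      walsh (2 ^ (m + 1) * q) x * dirichletKernel (2 ^ (m + 1) * q + s) x := by
  have hs : s ≤ 2 ^ (m + 1) := by rw [pow_succ]; omega
  have hlower' : (2 : ℝ) ^ m ≤ 4 * s := mod_cast hlower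
  have hupper' : (4 * s : ℝ) ≤ 7 * 2 ^ m := mod_cast hupper
  rw [setIntegral_walsh_mul_dirichletKernel_add q hs, le_div_iff₀ (by positivity), pow_succ]
  refine le_min ?_ ?_
  · linarith
  · rw [pow_succ]
    linarith

lemma logSum_div_eight_le_sum_setIntegral (q : ℕ) (hlower : 2 ^ m + 4 * L ≤ 4 * r)
    (hupper : 4 * r ≤ 7 * 2 ^ m) :
    logSum (L + 1) / 8 ≤ ∑ i ∈ Finset.Ico 1 (2 ^ (m + 1) * q + r),
      (∫ x in dyadicShell m,
        walsh (2 ^ (m + 1) * q) x * dirichletKernel (2 ^ (m + 1) * q + r - i) x) / i := by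
  rw [logSum_eq_sum_Ico, Finset.sum_div]
  have hpos : 0 < 2 ^ m := by positivity
  refine (Finset.sum_le_sum fun i hi => ?_).trans
    (Finset.sum_le_sum_of_subset_of_nonneg (Finset.Ico_subset_Ico_right (by omega))
      fun i _ _ => ?_)
  · have hiL := Finset.mem_Ico.1 hi
    rw [div_right_comm, Nat.add_sub_assoc (by omega)]
    gcongr
    exact one_div_eight_le_setIntegral_walsh_mul_dirichletKernel q (by omega) (by omega)
  · refine div_nonneg (setIntegral_walsh_mul_dirichletKernel_nonneg ?_) i.cast_nonneg
    rw [pow_succ]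
    omega

-- `p_n mod 2^{m+1} = p_{m/2}` keeps a distance of at least `2^{m-2}` from the zeros of the tent, so
-- the terms `i ≤ 2^{m-2}` alone contribute a fixed proportion of `l_{p_n}`.
lemma exists_le_setIntegral_walsh_mul_FKernel_pIdx {n : ℕ} (hn : 2 ≤ n) (hnm : n ≤ m)
    (hm : m ≤ 2 * n) :
    ∃ j, 1 / 128 ≤ ∫ x in dyadicShell m, walsh j x * FKernel (pIdx n) x := by
  obtain ⟨q, hq⟩ := exists_pIdx_eq_two_pow_mul_add hm
  obtain ⟨k, rfl⟩ : ∃ k, m = k + 2 := Nat.exists_eq_add_of_le' (hn.trans hnm)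
  have hlower := two_pow_le_two_mul_pIdx (k + 2)
  have hsum := logSum_div_eight_le_sum_setIntegral (L := 2 ^ k) q
    (by rw [pow_add] at hlower ⊢; omega) (four_mul_pIdx_le (k + 2))
  rw [← hq] at hsum
  have hpos : 0 < logSum (pIdx n) := zero_lt_one.trans_le (one_le_logSum (two_le_pIdx (by omega)))
  have hcompare : logSum (pIdx n) ≤ 16 * logSum (2 ^ k + 1) := by
    have hup := logSum_le_of_le_two_pow (pIdx_le_two_pow n)
    have hlow := le_logSum_two_pow_add_one k
    have hnk : (n : ℝ) ≤ k + 2 := mod_cast hnm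
    push_cast at hup
    linarith
  refine ⟨2 ^ (k + 2 + 1) * q, ?_⟩
  rw [integral_walsh_mul_FKernel, le_inv_mul_iff₀ hpos]
  linarith

end FKernel

section PeakSet

lemma setIntegral_le_mul_measureReal_add {α : Type*} [MeasurableSpace α] {μ : Measure α} {s : Set α}
    (hs : MeasurableSet s) (hμs : μ s ≠ ⊤) {g : α → ℝ} (hg : Measurable g) {t M : ℝ} (ht : 0 ≤ t)
    (hgM : ∀ x ∈ s, |g x| ≤ M) :
    ∫ x in s, g x ∂μ ≤ M * μ.real (s ∩ {x | t ≤ |g x|}) + t * μ.real s := by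
  have hpeak : MeasurableSet {x | t ≤ |g x|} := measurableSet_le measurable_const hg.abs
  have hint : IntegrableOn g s μ :=
    .of_bound hμs.lt_top hg.aestronglyMeasurable M <| (ae_restrict_iff' hs).2 <| .of_forall hgM
  have hlarge : ∫ x in s ∩ {x | t ≤ |g x|}, g x ∂μ ≤ M * μ.real (s ∩ {x | t ≤ |g x|}) :=
    (Real.le_norm_self _).trans <| norm_setIntegral_le_of_norm_le_const
      (measure_lt_top_of_subset Set.inter_subset_left hμs) fun x hx => hgM x hx.1
  have hsmall : ∫ x in s \ {x | t ≤ |g x|}, g x ∂μ ≤ t * μ.real (s \ {x | t ≤ |g x|}) :=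
    (Real.le_norm_self _).trans <| norm_setIntegral_le_of_norm_le_const
      (measure_lt_top_of_subset Set.sdiff_subset hμs) fun x hx => (not_le.1 hx.2).le
  calc ∫ x in s, g x ∂μ
      = ∫ x in s ∩ {x | t ≤ |g x|}, g x ∂μ + ∫ x in s \ {x | t ≤ |g x|}, g x ∂μ :=
        (integral_inter_add_sdiff hpeak hint).symm
    _ ≤ M * μ.real (s ∩ {x | t ≤ |g x|}) + t * μ.real (s \ {x | t ≤ |g x|}) :=
        add_le_add hlarge hsmall
    _ ≤ M * μ.real (s ∩ {x | t ≤ |g x|}) + t * μ.real s := by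
        gcongr
        exact Set.sdiff_subset

/-- The part of the shell `[2^{-m-1}, 2^{-m})` on which `F_{p_n}` attains its maximal possible
order of magnitude `2^m`. -/
def kernelPeakSet (n m : ℕ) : Set ℝ :=
  dyadicShell m ∩ {x | 1 / 128 * 2 ^ m ≤ |FKernel (pIdx n) x|}

lemma kernelPeakSet_subset_Ico (n m : ℕ) : kernelPeakSet n m ⊆ Set.Ico 0 1 :=
  Set.inter_subset_left.trans (dyadicShell_subset_Ico m)

lemma measurableSet_kernelPeakSet (n m : ℕ) : MeasurableSet (kernelPeakSet n m) :=
  (measurableSet_dyadicShell m).inter <|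
    measurableSet_le measurable_const (measurable_FKernel _).abs

lemma one_div_le_volume_real_kernelPeakSet {n m : ℕ} (hn : 2 ≤ n) (hnm : n ≤ m) (hm : m ≤ 2 * n) :
    1 / 256 * (1 / 2 ^ m) ≤ volume.real (kernelPeakSet n m) := by
  obtain ⟨j, hj⟩ := exists_le_setIntegral_walsh_mul_FKernel_pIdx hn hnm hm
  have habs (x : ℝ) : |walsh j x * FKernel (pIdx n) x| = |FKernel (pIdx n) x| := by
    rw [abs_mul, abs_walsh, one_mul]
  have hsplit := setIntegral_le_mul_measureReal_add (measurableSet_dyadicShell m)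
    (μ := volume) (by simp [dyadicShell]) ((measurable_walsh j).mul (measurable_FKernel (pIdx n)))
    (t := 1 / 128 * 2 ^ m) (M := 2 ^ m) (by positivity)
    fun x hx => (habs x).trans_le (abs_FKernel_le_of_mem_dyadicShell hx _)
  simp only [Pi.mul_apply, habs, volume_real_dyadicShell] at hsplit
  have hlow : 1 / 128 * 2 ^ m * (1 / 2 ^ (m + 1)) = (1 / 256 : ℝ) := by
    rw [pow_succ]
    field_simp
    norm_num
  rw [mul_one_div, div_le_iff₀' (by positivity), kernelPeakSet]
  linarith

end PeakSet

section TensorProduct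

variable {d : ℕ}

lemma cubeMeasure_eq_pi :
    cubeMeasure d = Measure.pi fun _ => volume.restrict (Set.Ico (0 : ℝ) 1) := by
  rw [cubeMeasure, unitCube, volume_pi, Measure.restrict_pi_pi]

instance : IsProbabilityMeasure (volume.restrict (Set.Ico (0 : ℝ) 1)) :=
  ⟨by simp⟩

instance : IsProbabilityMeasure (cubeMeasure d) := by
  rw [cubeMeasure_eq_pi]
  infer_instance

lemma walshCoef_prod (g : Fin d → ℝ → ℝ) (j : Fin d → ℕ) :
    walshCoef (fun y => ∏ i, g i (y i)) j =
      ∏ i, ∫ x in Set.Ico (0 : ℝ) 1, g i x * walsh (j i) x := by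
  simp only [walshCoef, cubeMeasure_eq_pi, ← Finset.prod_mul_distrib]
  exact integral_fintype_prod_eq_prod (fun i x => g i x * walsh (j i) x)

lemma rectPartialSum_prod_dirichletKernel (K N : Fin d → ℕ) (x : Fin d → ℝ) :
    rectPartialSum (fun y => ∏ i, dirichletKernel (K i) (y i)) N x =
      ∏ i, dirichletKernel (min (N i) (K i)) (x i) := by
  have hfactor (i : Fin d) : dirichletKernel (min (N i) (K i)) (x i) =
      ∑ k ∈ Finset.range (N i), (if k < K i then 1 else 0) * walsh k (x i) := by
    simp only [ite_mul, one_mul, zero_mul, ← Finset.sum_filter, dirichletKernel]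
    congr 1
    ext k
    simp
  simp only [rectPartialSum, walshCoef_prod, setIntegral_dirichletKernel_mul_walsh, hfactor,
    Finset.prod_univ_sum, Finset.prod_mul_distrib]

lemma mixedLogMean_prod_dirichletKernel (B : Finset (Fin d)) (K n : Fin d → ℕ) (x : Fin d → ℝ) :
    mixedLogMean B (fun y => ∏ i, dirichletKernel (K i) (y i)) n x =
      ∏ j, (logSum (n j))⁻¹ * ∑ i ∈ Finset.Ico 1 (n j),
        dirichletKernel (min (if j ∈ B then n j - i else i) (K j)) (x j) / i := by
  simp only [mixedLogMean, rectPartialSum_prod_dirichletKernel, Finset.prod_mul_distrib,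
    Finset.prod_inv_distrib, Finset.prod_univ_sum, Finset.prod_div_distrib]

lemma mixedLogMean_prod_dirichletKernel_eq_prod_FKernel (B : Finset (Fin d)) {K n : Fin d → ℕ}
    (hn : ∀ j, 2 ≤ n j) (hK : ∀ j ∈ B, n j ≤ K j) (x : Fin d → ℝ) :
    mixedLogMean B (fun y => ∏ i ∈ B, dirichletKernel (K i) (y i)) n x =
      ∏ i ∈ B, FKernel (n i) (x i) := by
  have hextend (y : Fin d → ℝ) : ∏ i ∈ B, dirichletKernel (K i) (y i) =
      ∏ i, dirichletKernel (if i ∈ B then K i else 1) (y i) := by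
    rw [← Finset.prod_subset B.subset_univ fun i _ hi => by simp [hi]]
    exact Finset.prod_congr rfl fun i hi => by rw [if_pos hi]
  simp only [hextend, mixedLogMean_prod_dirichletKernel]
  rw [← Finset.prod_subset B.subset_univ fun j _ hj => ?_]
  · refine Finset.prod_congr rfl fun j hj => ?_
    rw [FKernel, one_div]
    congr 1
    refine Finset.sum_congr rfl fun i _ => ?_
    rw [if_pos hj, if_pos hj, min_eq_left ((Nat.sub_le _ _).trans (hK j hj))]
  · have hmean : ∑ i ∈ Finset.Ico 1 (n j), dirichletKernel (min i 1) (x j) / i = logSum (n j) := by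
      rw [logSum_eq_sum_Ico]
      refine Finset.sum_congr rfl fun i hi => ?_
      rw [min_eq_right (Finset.mem_Ico.1 hi).1, dirichletKernel_one]
    simp only [if_neg hj, hmean]
    exact inv_mul_cancel₀ (zero_lt_one.trans_le (one_le_logSum (hn j))).ne'

end TensorProduct

section PeakBox

variable {d : ℕ} {B : Finset (Fin d)} {n : ℕ} {a : Fin d →₀ ℕ}

/-- The product of peak sets with exponents `m_j = 2n - a_j`, `j ∈ B`. For `∑_{j ∈ B} a_j = n` the
exponents lie in `[n, 2n]` (so the subtraction is not truncated) and add up to `n(2|B| - 1)`. -/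
def peakBox (B : Finset (Fin d)) (n : ℕ) (a : Fin d →₀ ℕ) : Set (Fin d → ℝ) :=
  Set.pi B fun j => kernelPeakSet n (2 * n - a j)

lemma measurableSet_peakBox (B : Finset (Fin d)) (n : ℕ) (a : Fin d →₀ ℕ) :
    MeasurableSet (peakBox B n a) :=
  .pi B.countable_toSet fun _ _ => measurableSet_kernelPeakSet _ _

lemma le_of_mem_finsuppAntidiag (ha : a ∈ B.finsuppAntidiag n) {j : Fin d} (hj : j ∈ B) :
    a j ≤ n :=
  (Finset.single_le_sum (fun _ _ => Nat.zero_le _) hj).trans_eq (Finset.mem_finsuppAntidiag.1 ha).1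

lemma sum_two_mul_sub_of_mem_finsuppAntidiag (ha : a ∈ B.finsuppAntidiag n) :
    ∑ j ∈ B, (2 * n - a j) = n * (2 * B.card - 1) := by
  have hsum : ∑ j ∈ B, a j = n := (Finset.mem_finsuppAntidiag.1 ha).1
  rw [Finset.sum_tsub_distrib _ fun j hj => (le_of_mem_finsuppAntidiag ha hj).trans (by omega),
    hsum, Finset.sum_const, smul_eq_mul, Nat.mul_sub, mul_one]
  ring_nf

lemma pairwiseDisjoint_peakBox :
    (B.finsuppAntidiag n : Set (Fin d →₀ ℕ)).PairwiseDisjoint (peakBox B n) := by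
  intro a ha b hb hab
  obtain ⟨j, hj, hne⟩ : ∃ j ∈ B, a j ≠ b j := by
    by_contra! heq
    refine hab (Finsupp.ext fun j => ?_)
    by_cases hj : j ∈ B
    · exact heq j hj
    · rw [Finsupp.notMem_support_iff.1 fun h => hj ((Finset.mem_finsuppAntidiag.1 ha).2 h),
        Finsupp.notMem_support_iff.1 fun h => hj ((Finset.mem_finsuppAntidiag.1 hb).2 h)]
  have hexp : 2 * n - a j ≠ 2 * n - b j := by
    have := le_of_mem_finsuppAntidiag ha hj
    have := le_of_mem_finsuppAntidiag hb hj
    omega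
  exact Set.disjoint_left.2 fun x hxa hxb =>
    Set.disjoint_left.1 (pairwise_disjoint_dyadicShell hexp) (hxa j hj).1 (hxb j hj).1

lemma le_abs_prod_FKernel_of_mem_peakBox (ha : a ∈ B.finsuppAntidiag n) {x : Fin d → ℝ}
    (hx : x ∈ peakBox B n a) :
    1 / 128 ^ B.card * 2 ^ (n * (2 * B.card - 1)) ≤ |∏ j ∈ B, FKernel (pIdx n) (x j)| :=
  calc (1 / 128 ^ B.card * 2 ^ (n * (2 * B.card - 1)) : ℝ)
      = ∏ j ∈ B, 1 / 128 * 2 ^ (2 * n - a j) := by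
        rw [Finset.prod_mul_distrib, Finset.prod_const, Finset.prod_pow_eq_pow_sum,
          sum_two_mul_sub_of_mem_finsuppAntidiag ha, one_div_pow]
    _ ≤ ∏ j ∈ B, |FKernel (pIdx n) (x j)| :=
        Finset.prod_le_prod (fun _ _ => by positivity) fun j hj => (hx j hj).2
    _ = |∏ j ∈ B, FKernel (pIdx n) (x j)| := (Finset.abs_prod _ _).symm

lemma cubeMeasure_real_peakBox (B : Finset (Fin d)) (n : ℕ) (a : Fin d →₀ ℕ) :
    (cubeMeasure d).real (peakBox B n a) =
      ∏ j ∈ B, volume.real (kernelPeakSet n (2 * n - a j)) := by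
  rw [peakBox, cubeMeasure_eq_pi, measureReal_def, Measure.pi_pi_finset, ENNReal.toReal_prod]
  refine Finset.prod_congr rfl fun j _ => ?_
  rw [Measure.restrict_eq_self _ (kernelPeakSet_subset_Ico _ _), measureReal_def]

lemma le_cubeMeasure_real_peakBox (hn : 2 ≤ n) (ha : a ∈ B.finsuppAntidiag n) :
    1 / 256 ^ B.card * (1 / 2 ^ (n * (2 * B.card - 1))) ≤ (cubeMeasure d).real (peakBox B n a) :=
  calc (1 / 256 ^ B.card * (1 / 2 ^ (n * (2 * B.card - 1))) : ℝ)
      = ∏ j ∈ B, 1 / 256 * (1 / 2 ^ (2 * n - a j)) := by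
        rw [Finset.prod_mul_distrib, Finset.prod_const, Finset.prod_div_distrib,
          Finset.prod_const_one, Finset.prod_pow_eq_pow_sum,
          sum_two_mul_sub_of_mem_finsuppAntidiag ha, one_div_pow]
    _ ≤ ∏ j ∈ B, volume.real (kernelPeakSet n (2 * n - a j)) := by
        refine Finset.prod_le_prod (fun _ _ => by positivity) fun j hj => ?_
        have := le_of_mem_finsuppAntidiag ha hj
        exact one_div_le_volume_real_kernelPeakSet hn (by omega) (by omega)
    _ = (cubeMeasure d).real (peakBox B n a) := (cubeMeasure_real_peakBox B n a).symm

lemma pow_le_factorial_mul_card_finsuppAntidiag {ι : Type*} [DecidableEq ι] {s : Finset ι}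
    (hs : s.Nonempty) (n : ℕ) :
    n ^ (s.card - 1) ≤ (s.card - 1).factorial * (s.finsuppAntidiag n).card := by
  obtain ⟨b, hb⟩ : ∃ b, s.card = b + 1 := Nat.exists_eq_succ_of_ne_zero hs.card_pos.ne'
  rw [Finset.card_finsuppAntidiag_nat_eq_choose, hb, Nat.add_sub_cancel, Nat.add_right_comm,
    Nat.add_sub_cancel, Nat.add_comm b, Nat.choose_symm_add,
    ← Nat.ascFactorial_eq_factorial_mul_choose]
  exact (Nat.pow_le_pow_left n.le_succ b).trans (Nat.pow_succ_le_ascFactorial _ _)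

lemma le_cubeMeasure_real_iUnion_peakBox (hB : B.Nonempty) (hn : 2 ≤ n) :
    1 / (256 ^ B.card * (B.card - 1).factorial) * (n : ℝ) ^ (B.card - 1) /
        2 ^ (n * (2 * B.card - 1)) ≤
      (cubeMeasure d).real (⋃ a ∈ B.finsuppAntidiag n, peakBox B n a) := by
  have hcard : (n : ℝ) ^ (B.card - 1) / (B.card - 1).factorial ≤ (B.finsuppAntidiag n).card := by
    rw [div_le_iff₀' (by positivity)]
    exact_mod_cast pow_le_factorial_mul_card_finsuppAntidiag hB n
  calc _ = (n : ℝ) ^ (B.card - 1) / (B.card - 1).factorial *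
        (1 / 256 ^ B.card * (1 / 2 ^ (n * (2 * B.card - 1)))) := by field_simp
    _ ≤ (B.finsuppAntidiag n).card * (1 / 256 ^ B.card * (1 / 2 ^ (n * (2 * B.card - 1)))) := by
        gcongr
    _ ≤ ∑ a ∈ B.finsuppAntidiag n, (cubeMeasure d).real (peakBox B n a) := by
        rw [← nsmul_eq_mul]
        exact Finset.card_nsmul_le_sum _ _ _ fun a ha => le_cubeMeasure_real_peakBox hn ha
    _ = (cubeMeasure d).real (⋃ a ∈ B.finsuppAntidiag n, peakBox B n a) :=
        (measureReal_biUnion_finset pairwiseDisjoint_peakBox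
          fun a _ => measurableSet_peakBox B n a).symm

end PeakBox

theorem stmt16_general {d : ℕ} {B : Finset (Fin d)} (hB : B.Nonempty) {n : ℕ} (hn : 2 ≤ n) :
    1 / (256 ^ B.card * (B.card - 1).factorial) * (n : ℝ) ^ (B.card - 1) /
        2 ^ (n * (2 * B.card - 1)) ≤
      (cubeMeasure d).real {x | 1 / 128 ^ B.card * 2 ^ (n * (2 * B.card - 1)) ≤
        |mixedLogMean B (fun y => ∏ i ∈ B, dirichletKernel (2 ^ (2 * n + 1)) (y i))
          (fun _ => pIdx n) x|} := by
  simp only [mixedLogMean_prod_dirichletKernel_eq_prod_FKernel B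
    (fun _ => two_le_pIdx (by omega : n ≠ 0)) fun _ _ => pIdx_le_two_pow n]
  exact (le_cubeMeasure_real_iUnion_peakBox hB hn).trans <| measureReal_mono <|
    Set.iUnion₂_subset fun a ha x hx => le_abs_prod_FKernel_of_mem_peakBox ha hx

/-- measure lower bound: for `|B| > 1`, the set where the mixed logarithmic
mean of `⊗_{i∈B} D_{2^{2n+1}}` exceeds `c₁·2^{n(2|B|-1)}` has measure at least
`c₂·n^{|B|-1}/2^{n(2|B|-1)}`. -/
theorem stmt16 (d : ℕ) (hd : 1 ≤ d) (B : Finset (Fin d)) (hB : 1 < B.card) :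
    ∃ c₁ > (0:ℝ), ∃ c₂ > (0:ℝ), ∀ n : ℕ, m₀ ≤ n →
      c₂ * (n : ℝ) ^ (B.card - 1) / 2 ^ (n * (2 * B.card - 1)) ≤
        ((cubeMeasure d) {x | c₁ * 2 ^ (n * (2 * B.card - 1)) ≤
          |mixedLogMean B (fun y => ∏ i ∈ B, dirichletKernel (2 ^ (2 * n + 1)) (y i))
            (fun _ => pIdx n) x|}).toReal := by
  exact ⟨1 / 128 ^ B.card, by positivity, 1 / (256 ^ B.card * (B.card - 1).factorial),
    by positivity, fun n hn =>
      stmt16_general (Finset.card_pos.1 (zero_lt_one.trans hB)) (two_le_m₀.trans hn)⟩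

end
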